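/- Let y be a quasi shell solution, let C_l, C_u > 0 be constants such that C_l γ(r)^q/r⁴ ≤ ϱ(r) and p(r) ≤ C_u γ(r)^{q+1}/r⁴ for all r ∈ [R₀, 2R₀] with γ(r) ≥ 0, and define C_m = max{1, C_u, 4πC_u}, C₀ = min{1/4, (C_m 8^{1/(q+1)})^{−1}}, σ_* = C₀R₀^{1+(2q+1)/(q(q+1))}, γ_* = σ_*/(2(R₀+σ_*)), κ = 9·2^{2q}/(C_l C₀^q), and K = max{C₀, κ}. There exists ε > 0 depending only on k, ℓ, L₀, C_l, C_u such that if R₀ ≤ ε and R₀^{1/(1+q)} K ≤ 1, then there exists a radius r₂ with R₀ + σ_* < r₂ ≤ R₀ + σ_* + κR₀^{(q+2)/(q+1)} such that γ(r₂) = γ_* and γ(r) ≥ γ_* for all r ∈ [R₀ + σ_*, r₂]. -/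

import Mathlib

open MeasureTheory Real Set Filter

/-- The constant `c_ℓ = 2π ∫₀¹ s^ℓ (1-s)^{-1/2} ds`. -/
noncomputable def cConst (ℓ : ℝ) : ℝ :=
  2 * π * ∫ s in Set.Ioc (0 : ℝ) 1, s ^ ℓ / Real.sqrt (1 - s)

/-- Energy density of the massless Einstein--Vlasov ansatz. -/
noncomputable def rho (k ℓ L0 : ℝ) (y : ℝ → ℝ) (r : ℝ) : ℝ :=
  cConst ℓ * r ^ (2 * ℓ) *
    ∫ ε in Set.Ioc (Real.sqrt L0 / r) (Real.exp (y r)),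
      (1 - ε * Real.exp (-(y r))) ^ k * ε ^ 2 * (ε ^ 2 - L0 / r ^ 2) ^ (ℓ + 1 / 2)

/-- Radial pressure of the massless Einstein--Vlasov ansatz. -/
noncomputable def pres (k ℓ L0 : ℝ) (y : ℝ → ℝ) (r : ℝ) : ℝ :=
  (cConst ℓ / (2 * ℓ + 3)) * r ^ (2 * ℓ) *
    ∫ ε in Set.Ioc (Real.sqrt L0 / r) (Real.exp (y r)),
      (1 - ε * Real.exp (-(y r))) ^ k * (ε ^ 2 - L0 / r ^ 2) ^ (ℓ + 3 / 2)

/-- The Hawking mass `m(r) = 4π ∫₀ʳ s² ϱ(s) ds`. -/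
noncomputable def hawkingMass (k ℓ L0 : ℝ) (y : ℝ → ℝ) (r : ℝ) : ℝ :=
  4 * π * ∫ s in Set.Ioc (0 : ℝ) r, s ^ 2 * rho k ℓ L0 y s

/-- The characteristic function `γ(r) = y(r) - (1/2) ln (L₀ / r²)`. -/
noncomputable def charFn (L0 : ℝ) (y : ℝ → ℝ) (r : ℝ) : ℝ :=
  y r - (1 / 2) * Real.log (L0 / r ^ 2)

/-- The inner radius `R₀ = √L₀ e^{-y(0)}`. -/
noncomputable def innerRadius (L0 : ℝ) (y : ℝ → ℝ) : ℝ :=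
  Real.sqrt L0 * Real.exp (-(y 0))

/-- A quasi shell solution of the massless Einstein--Vlasov system. -/
def QuasiShell (k ℓ L0 : ℝ) (y : ℝ → ℝ) : Prop :=
  ContDiffOn ℝ 1 y (Set.Ici 0) ∧
  ∀ r > 0, 2 * hawkingMass k ℓ L0 y r / r < 1 ∧
    HasDerivAt y
      (-(1 - 2 * hawkingMass k ℓ L0 y r / r)⁻¹ *
        (4 * π * r * pres k ℓ L0 y r + hawkingMass k ℓ L0 y r / r ^ 2)) r

/-- `q = k + ℓ + 3/2`. -/
noncomputable def qExp (k ℓ : ℝ) : ℝ := k + ℓ + 3 / 2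

/-- `C_m = max{1, C_u, 4πC_u}`. -/
noncomputable def Cmax (Cu : ℝ) : ℝ := max 1 (max Cu (4 * π * Cu))

/-- `C₀ = min{1/4, (C_m 8^{1/(q+1)})⁻¹}`. -/
noncomputable def C0c (k ℓ Cu : ℝ) : ℝ :=
  min (1 / 4) (Cmax Cu * 8 ^ (1 / (qExp k ℓ + 1)))⁻¹

/-- `σ_* = C₀ R₀^{1 + (2q+1)/(q(q+1))}`. -/
noncomputable def sigmaStar (k ℓ Cu R0 : ℝ) : ℝ :=
  C0c k ℓ Cu * R0 ^ (1 + (2 * qExp k ℓ + 1) / (qExp k ℓ * (qExp k ℓ + 1)))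

/-- `γ_* = σ_* / (2(R₀ + σ_*))`. -/
noncomputable def gammaStar (k ℓ Cu R0 : ℝ) : ℝ :=
  sigmaStar k ℓ Cu R0 / (2 * (R0 + sigmaStar k ℓ Cu R0))

/-- `κ = 9·2^{2q} / (C_l C₀^q)`. -/
noncomputable def kappaC (k ℓ Cl Cu : ℝ) : ℝ :=
  9 * 2 ^ (2 * qExp k ℓ) / (Cl * C0c k ℓ Cu ^ qExp k ℓ)

/-- `K = max{C₀, κ}`. -/
noncomputable def Kc (k ℓ Cl Cu : ℝ) : ℝ := max (C0c k ℓ Cu) (kappaC k ℓ Cl Cu)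

lemma cConst_nonneg (ℓ : ℝ) : 0 ≤ cConst ℓ := by
  unfold cConst
  have : 0 ≤ ∫ s in Set.Ioc (0 : ℝ) 1, s ^ ℓ / Real.sqrt (1 - s) := by
    apply setIntegral_nonneg measurableSet_Ioc
    intro s hs
    exact div_nonneg (Real.rpow_nonneg hs.1.le _) (Real.sqrt_nonneg _)
  have := Real.pi_pos
  positivity

lemma aux_base {L0 Y r e : ℝ} (hL : 0 < L0) (hr : 0 < r)
    (he : e ∈ Set.Ioc (Real.sqrt L0 / r) (Real.exp Y)) :
    0 < e ∧ 0 ≤ 1 - e * Real.exp (-Y) ∧ 0 ≤ e ^ 2 - L0 / r ^ 2 := by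
  have h0 : 0 < Real.sqrt L0 / r := div_pos (Real.sqrt_pos.2 hL) hr
  have he0 : 0 < e := h0.trans he.1
  refine ⟨he0, ?_, ?_⟩
  · have : e * Real.exp (-Y) ≤ Real.exp Y * Real.exp (-Y) :=
      mul_le_mul_of_nonneg_right he.2 (Real.exp_pos _).le
    rw [← Real.exp_add] at this
    simp at this
    linarith
  · have h1 : (Real.sqrt L0 / r) ^ 2 ≤ e ^ 2 := pow_le_pow_left₀ h0.le he.1.le 2
    rw [div_pow, Real.sq_sqrt hL.le] at h1
    linarith

lemma rho_nonneg {k ℓ L0 : ℝ} {y : ℝ → ℝ} {r : ℝ} (hL : 0 < L0) (hr : 0 < r) :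
    0 ≤ rho k ℓ L0 y r := by
  unfold rho
  refine mul_nonneg (mul_nonneg (cConst_nonneg _) (Real.rpow_nonneg hr.le _)) ?_
  apply setIntegral_nonneg measurableSet_Ioc
  intro e he
  obtain ⟨h1, h2, h3⟩ := aux_base hL hr he
  exact mul_nonneg (mul_nonneg (Real.rpow_nonneg h2 _) (sq_nonneg _)) (Real.rpow_nonneg h3 _)

lemma pres_nonneg {k ℓ L0 : ℝ} {y : ℝ → ℝ} {r : ℝ} (hl : -(1 / 2) ≤ ℓ) (hL : 0 < L0)
    (hr : 0 < r) : 0 ≤ pres k ℓ L0 y r := by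
  unfold pres
  refine mul_nonneg (mul_nonneg (div_nonneg (cConst_nonneg _) (by linarith))
    (Real.rpow_nonneg hr.le _)) ?_
  apply setIntegral_nonneg measurableSet_Ioc
  intro e he
  obtain ⟨h1, h2, h3⟩ := aux_base hL hr he
  exact mul_nonneg (Real.rpow_nonneg h2 _) (Real.rpow_nonneg h3 _)

lemma mass_nonneg {k ℓ L0 : ℝ} {y : ℝ → ℝ} {r : ℝ} (hL : 0 < L0) :
    0 ≤ hawkingMass k ℓ L0 y r := by
  unfold hawkingMass
  refine mul_nonneg (by positivity) ?_
  apply setIntegral_nonneg measurableSet_Ioc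
  intro s hs
  exact mul_nonneg (sq_nonneg _) (rho_nonneg hL hs.1)

lemma charFn_eq {L0 : ℝ} {y : ℝ → ℝ} {r : ℝ} (hL : 0 < L0) (hr : 0 < r) :
    charFn L0 y r = y r + Real.log r - Real.log L0 / 2 := by
  unfold charFn
  rw [Real.log_div hL.ne' (by positivity), Real.log_pow]
  push_cast; ring

lemma exp_y {L0 : ℝ} {y : ℝ → ℝ} {r : ℝ} (hL : 0 < L0) (hr : 0 < r) :
    Real.exp (y r) = Real.sqrt L0 / r * Real.exp (charFn L0 y r) := by
  have hs : Real.sqrt L0 / r = Real.exp (Real.log L0 / 2 - Real.log r) := by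
    rw [Real.exp_sub, Real.exp_log hr, ← Real.log_sqrt hL.le, Real.exp_log (Real.sqrt_pos.2 hL)]
  rw [hs, ← Real.exp_add, charFn_eq hL hr]
  congr 1; ring

lemma Ioc_empty_of {L0 : ℝ} {y : ℝ → ℝ} {r : ℝ} (hL : 0 < L0) (hr : 0 < r)
    (h : charFn L0 y r ≤ 0) : Set.Ioc (Real.sqrt L0 / r) (Real.exp (y r)) = ∅ := by
  apply Set.Ioc_eq_empty
  rw [not_lt, exp_y hL hr]
  have h0 : 0 < Real.sqrt L0 / r := div_pos (Real.sqrt_pos.2 hL) hr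
  have : Real.exp (charFn L0 y r) ≤ 1 := Real.exp_le_one_iff.2 h
  nlinarith

lemma rho_zero {k ℓ L0 : ℝ} {y : ℝ → ℝ} {r : ℝ} (hL : 0 < L0) (hr : 0 < r)
    (h : charFn L0 y r ≤ 0) : rho k ℓ L0 y r = 0 := by
  unfold rho
  rw [Ioc_empty_of hL hr h]; simp

lemma pres_zero {k ℓ L0 : ℝ} {y : ℝ → ℝ} {r : ℝ} (hL : 0 < L0) (hr : 0 < r)
    (h : charFn L0 y r ≤ 0) : pres k ℓ L0 y r = 0 := by
  unfold pres
  rw [Ioc_empty_of hL hr h]; simp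

noncomputable def Dc (ℓ L0 : ℝ) : ℝ :=
  cConst ℓ * (8 * 8 ^ (ℓ + 1 / 2) * L0 ^ (ℓ + 1 / 2) * L0 * Real.sqrt L0)

lemma Dc_nonneg {ℓ L0 : ℝ} (hL : 0 < L0) : 0 ≤ Dc ℓ L0 := by
  unfold Dc
  have := cConst_nonneg ℓ
  positivity

lemma rho_upper {k ℓ L0 : ℝ} {y : ℝ → ℝ} {r : ℝ} (hk : 0 ≤ k) (hl : -(1 / 2) ≤ ℓ)
    (hL : 0 < L0) (hr : 0 < r)
    (h0 : 0 < charFn L0 y r) (h2 : charFn L0 y r ≤ Real.log 2) :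
    rho k ℓ L0 y r ≤ Dc ℓ L0 * charFn L0 y r ^ qExp k ℓ / r ^ 4 := by
  have hey := exp_y (y := y) hL hr
  set g := charFn L0 y r with hg
  set a := Real.sqrt L0 / r with ha
  have ha0 : 0 < a := div_pos (Real.sqrt_pos.2 hL) hr
  have ha2 : a ^ 2 = L0 / r ^ 2 := by rw [ha, div_pow, Real.sq_sqrt hL.le]
  have hE2 : Real.exp g ≤ 2 := by
    rw [← Real.exp_log (show (0 : ℝ) < 2 by norm_num)]; exact Real.exp_le_exp.2 h2
  have hE1 : 1 ≤ Real.exp g := Real.one_le_exp h0.le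
  have hEm : 1 - g ≤ Real.exp (-g) := by linarith [Real.add_one_le_exp (-g)]
  have hEE : Real.exp g * Real.exp (-g) = 1 := by rw [← Real.exp_add]; simp
  have hEg : Real.exp g - 1 ≤ 2 * g := by
    have : Real.exp g * (1 - g) ≤ 1 := by nlinarith
    nlinarith
  have hEsq : Real.exp g ^ 2 - 1 ≤ 8 * g := by nlinarith
  have hint : ‖∫ ε in Set.Ioc (Real.sqrt L0 / r) (Real.exp (y r)),
      (1 - ε * Real.exp (-(y r))) ^ k * ε ^ 2 * (ε ^ 2 - L0 / r ^ 2) ^ (ℓ + 1 / 2)‖ ≤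
      (g ^ k * (4 * a ^ 2) * (8 * g * a ^ 2) ^ (ℓ + 1 / 2)) *
        volume.real (Set.Ioc (Real.sqrt L0 / r) (Real.exp (y r))) := by
    apply norm_setIntegral_le_of_norm_le_const
    · simp
    intro e he
    obtain ⟨b1, b2, b3⟩ := aux_base hL hr he
    rw [Real.norm_of_nonneg (mul_nonneg (mul_nonneg (Real.rpow_nonneg b2 _) (sq_nonneg _))
      (Real.rpow_nonneg b3 _))]
    have he2 : e ≤ a * Real.exp g := by rw [← hey]; exact he.2
    have he1 : a < e := he.1
    have hee : a * Real.exp (-(y r)) = Real.exp (-g) := by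
      rw [Real.exp_neg, hey, Real.exp_neg]; field_simp
    have c1 : 1 - e * Real.exp (-(y r)) ≤ g := by
      have : a * Real.exp (-(y r)) ≤ e * Real.exp (-(y r)) :=
        mul_le_mul_of_nonneg_right he1.le (Real.exp_pos _).le
      linarith
    have c2' : e ^ 2 ≤ a ^ 2 * Real.exp g ^ 2 := by
      rw [← mul_pow]; exact pow_le_pow_left₀ b1.le he2 2
    have c2'' : Real.exp g ^ 2 ≤ 4 := by nlinarith
    have c2 : e ^ 2 ≤ 4 * a ^ 2 := by nlinarith [sq_nonneg a]
    have c3 : e ^ 2 - L0 / r ^ 2 ≤ 8 * g * a ^ 2 := by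
      rw [← ha2]; nlinarith [sq_nonneg a]
    apply mul_le_mul
    · apply mul_le_mul
      · exact Real.rpow_le_rpow b2 c1 hk
      · exact c2
      · positivity
      · positivity
    · exact Real.rpow_le_rpow b3 c3 (by linarith)
    · exact Real.rpow_nonneg b3 _
    · positivity
  have hvol : volume.real (Set.Ioc (Real.sqrt L0 / r) (Real.exp (y r))) ≤ 2 * g * a := by
    rw [Measure.real, Real.volume_Ioc, hey, ENNReal.toReal_ofReal]
    · nlinarith
    · nlinarith
  have hint2 := (le_abs_self _).trans (hint.trans (mul_le_mul_of_nonneg_left hvol (by positivity)))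
  unfold rho
  have hc := cConst_nonneg ℓ
  refine (mul_le_mul_of_nonneg_left hint2 (by positivity)).trans (le_of_eq ?_)
  have e1 : (8 * g * a ^ 2) ^ (ℓ + 1 / 2)
      = 8 ^ (ℓ + 1 / 2) * g ^ (ℓ + 1 / 2) * (L0 ^ (ℓ + 1 / 2) / (r ^ (2 * ℓ) * r)) := by
    rw [Real.mul_rpow (by positivity) (by positivity), Real.mul_rpow (by positivity) (by positivity),
      ha2, Real.div_rpow (by positivity) (by positivity)]
    congr 2
    rw [← Real.rpow_natCast r 2, ← Real.rpow_mul hr.le, ← Real.rpow_add_one hr.ne']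
    congr 1; push_cast; ring
  have e2 : g ^ qExp k ℓ = g ^ k * g ^ (ℓ + 1 / 2) * g := by
    rw [← Real.rpow_add h0, ← Real.rpow_add_one h0.ne']
    congr 1; unfold qExp; ring
  have hr2 : 0 < r ^ (2 * ℓ) := Real.rpow_pos_of_pos hr _
  rw [e1, e2, ha2, ha]
  unfold Dc
  field_simp
  ring

lemma rho_aemeas {k ℓ L0 : ℝ} {y : ℝ → ℝ} (hy : ContinuousOn y (Set.Ici 0)) (R : ℝ) :
    AEStronglyMeasurable (fun s => s ^ 2 * rho k ℓ L0 y s)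
      (volume.restrict (Set.Ioc (0 : ℝ) R)) := by
  set z : ℝ → ℝ := fun s => y (max s 0) with hz
  have hzc : Continuous z := hy.comp_continuous (by fun_prop) (fun s => by simp)
  have hzm := hzc.measurable
  have hm : Measurable (fun s => s ^ 2 * rho k ℓ L0 z s) := by
    have : ∀ s, rho k ℓ L0 z s = cConst ℓ * s ^ (2 * ℓ) * ∫ e,
        (fun x : ℝ × ℝ => Set.indicator
          {x : ℝ × ℝ | Real.sqrt L0 / x.1 < x.2 ∧ x.2 ≤ Real.exp (z x.1)}
          (fun x => (1 - x.2 * Real.exp (-(z x.1))) ^ k * x.2 ^ 2 *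
            (x.2 ^ 2 - L0 / x.1 ^ 2) ^ (ℓ + 1 / 2)) x) (s, e) := by
      intro s
      unfold rho
      rw [← integral_indicator measurableSet_Ioc]
      rfl
    simp_rw [this]
    have hms : MeasurableSet
        {x : ℝ × ℝ | Real.sqrt L0 / x.1 < x.2 ∧ x.2 ≤ Real.exp (z x.1)} :=
      MeasurableSet.inter
        (measurableSet_lt (f := fun x : ℝ × ℝ => Real.sqrt L0 / x.1) (g := fun x : ℝ × ℝ => x.2)
          (by fun_prop) (by fun_prop))
        (measurableSet_le (f := fun x : ℝ × ℝ => x.2) (g := fun x : ℝ × ℝ => Real.exp (z x.1))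
          (by fun_prop) (by fun_prop))
    have hF : Measurable (Set.indicator
          {x : ℝ × ℝ | Real.sqrt L0 / x.1 < x.2 ∧ x.2 ≤ Real.exp (z x.1)}
          (fun x => (1 - x.2 * Real.exp (-(z x.1))) ^ k * x.2 ^ 2 *
            (x.2 ^ 2 - L0 / x.1 ^ 2) ^ (ℓ + 1 / 2))) :=
      Measurable.indicator (by fun_prop) hms
    have hI := (hF.stronglyMeasurable.integral_prod_right' (ν := volume)).measurable
    exact Measurable.mul (by fun_prop) (Measurable.mul (by fun_prop) hI)
  refine (hm.aestronglyMeasurable).congr ?_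
  filter_upwards [ae_restrict_mem measurableSet_Ioc] with s hs
  have : z s = y s := by simp [hz, max_eq_left hs.1.le]
  simp only [rho, this]

lemma innerRadius_pos {L0 : ℝ} {y : ℝ → ℝ} (hL : 0 < L0) : 0 < innerRadius L0 y :=
  mul_pos (Real.sqrt_pos.2 hL) (Real.exp_pos _)

lemma log_innerRadius {L0 : ℝ} {y : ℝ → ℝ} (hL : 0 < L0) :
    Real.log (innerRadius L0 y) = Real.log L0 / 2 - y 0 := by
  unfold innerRadius
  rw [Real.log_mul (Real.sqrt_pos.2 hL).ne' (Real.exp_pos _).ne', Real.log_exp,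
    Real.log_sqrt hL.le]
  ring

lemma y_anti {k ℓ L0 : ℝ} {y : ℝ → ℝ} (hl : -(1 / 2) ≤ ℓ) (hL : 0 < L0)
    (hy : QuasiShell k ℓ L0 y) : AntitoneOn y (Set.Ici 0) := by
  apply antitoneOn_of_deriv_nonpos (convex_Ici 0) hy.1.continuousOn
  · intro r hr
    rw [interior_Ici] at hr
    exact (hy.2 r hr).2.differentiableAt.differentiableWithinAt
  · intro r hr
    rw [interior_Ici] at hr
    have hr0 : 0 < r := hr
    rw [(hy.2 r hr).2.deriv, neg_mul]
    have h1 : 0 ≤ (1 - 2 * hawkingMass k ℓ L0 y r / r)⁻¹ :=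
      inv_nonneg.2 (by linarith [(hy.2 r hr).1])
    have h2 := pres_nonneg (k := k) (y := y) hl hL hr0
    have h3 := mass_nonneg (k := k) (ℓ := ℓ) (y := y) (r := r) hL
    have h4 := Real.pi_pos
    have : 0 ≤ (1 - 2 * hawkingMass k ℓ L0 y r / r)⁻¹ *
        (4 * π * r * pres k ℓ L0 y r + hawkingMass k ℓ L0 y r / r ^ 2) := by positivity
    linarith

lemma gam_le {k ℓ L0 : ℝ} {y : ℝ → ℝ} (hl : -(1 / 2) ≤ ℓ) (hL : 0 < L0)
    (hy : QuasiShell k ℓ L0 y) {r : ℝ} (hr : 0 < r) :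
    charFn L0 y r ≤ Real.log (r / innerRadius L0 y) := by
  have h := y_anti hl hL hy (Set.mem_Ici.2 le_rfl) (Set.mem_Ici.2 hr.le) hr.le
  rw [Real.log_div hr.ne' (innerRadius_pos hL).ne', log_innerRadius hL, charFn_eq hL hr]
  linarith

lemma gam_nonpos {k ℓ L0 : ℝ} {y : ℝ → ℝ} (hl : -(1 / 2) ≤ ℓ) (hL : 0 < L0)
    (hy : QuasiShell k ℓ L0 y) {r : ℝ} (hr : 0 < r) (hR : r ≤ innerRadius L0 y) :
    charFn L0 y r ≤ 0 := by
  refine (gam_le hl hL hy hr).trans ?_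
  have hp := innerRadius_pos (y := y) hL
  apply Real.log_nonpos (by positivity)
  rw [div_le_one hp]; exact hR

lemma mass_zero {k ℓ L0 : ℝ} {y : ℝ → ℝ} (hl : -(1 / 2) ≤ ℓ) (hL : 0 < L0)
    (hy : QuasiShell k ℓ L0 y) {r : ℝ} (hR : r ≤ innerRadius L0 y) :
    hawkingMass k ℓ L0 y r = 0 := by
  unfold hawkingMass
  rw [setIntegral_eq_zero_of_forall_eq_zero, mul_zero]
  intro s hs
  rw [rho_zero hL hs.1 (gam_nonpos hl hL hy hs.1 (hs.2.trans hR)), mul_zero]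

lemma gam_R {k ℓ L0 : ℝ} {y : ℝ → ℝ} (hl : -(1 / 2) ≤ ℓ) (hL : 0 < L0)
    (hy : QuasiShell k ℓ L0 y) : charFn L0 y (innerRadius L0 y) = 0 := by
  have hp := innerRadius_pos (y := y) hL
  apply le_antisymm (gam_nonpos hl hL hy hp le_rfl)
  have hm : MonotoneOn y (Set.Icc 0 (innerRadius L0 y)) := by
    apply monotoneOn_of_deriv_nonneg (convex_Icc _ _)
      (hy.1.continuousOn.mono Set.Icc_subset_Ici_self)
    · intro r hr
      rw [interior_Icc] at hr
      exact (hy.2 r hr.1).2.differentiableAt.differentiableWithinAt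
    · intro r hr
      rw [interior_Icc] at hr
      rw [(hy.2 r hr.1).2.deriv, mass_zero hl hL hy hr.2.le,
        pres_zero hL hr.1 (gam_nonpos hl hL hy hr.1 hr.2.le)]
      simp
  have := hm (Set.left_mem_Icc.2 hp.le) (Set.right_mem_Icc.2 hp.le) hp.le
  rw [charFn_eq hL hp, log_innerRadius hL]
  linarith

/-- Bound on `s² ϱ`. -/
lemma rho_bound {k ℓ L0 : ℝ} {y : ℝ → ℝ} (hk : 0 ≤ k) (hl : -(1 / 2) ≤ ℓ) (hL : 0 < L0)
    (hy : QuasiShell k ℓ L0 y) {x s : ℝ} (hx0 : 0 ≤ x) (hx : x ≤ 1)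
    (hs0 : 0 < s) (hs : s ≤ innerRadius L0 y * (1 + x)) :
    ‖s ^ 2 * rho k ℓ L0 y s‖ ≤ Dc ℓ L0 * x ^ qExp k ℓ / innerRadius L0 y ^ 2 := by
  have hp := innerRadius_pos (y := y) hL
  have hD := Dc_nonneg (ℓ := ℓ) hL
  rw [Real.norm_of_nonneg (mul_nonneg (sq_nonneg _) (rho_nonneg hL hs0))]
  rcases le_or_gt (charFn L0 y s) 0 with h | h
  · rw [rho_zero hL hs0 h, mul_zero]; positivity
  have hRs : innerRadius L0 y ≤ s := by
    by_contra hc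
    exact absurd (gam_nonpos hl hL hy hs0 (not_le.1 hc).le) (not_le.2 h)
  have h1 := gam_le hl hL hy hs0
  have h2 : s / innerRadius L0 y ≤ 1 + x := by rw [div_le_iff₀ hp]; linarith
  have h3 : charFn L0 y s ≤ x := by
    have := Real.log_le_sub_one_of_pos (show 0 < s / innerRadius L0 y by positivity)
    linarith
  have h4 : charFn L0 y s ≤ Real.log 2 :=
    h1.trans (Real.log_le_log (by positivity) (by linarith))
  have h5 := rho_upper hk hl hL hs0 h h4
  have hq : 0 ≤ qExp k ℓ := by unfold qExp; linarith
  calc s ^ 2 * rho k ℓ L0 y s ≤ s ^ 2 * (Dc ℓ L0 * charFn L0 y s ^ qExp k ℓ / s ^ 4) := by gcongr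
    _ = Dc ℓ L0 * charFn L0 y s ^ qExp k ℓ / s ^ 2 := by field_simp
    _ ≤ _ := by gcongr

lemma rho_integrable {k ℓ L0 : ℝ} {y : ℝ → ℝ} (hk : 0 ≤ k) (hl : -(1 / 2) ≤ ℓ) (hL : 0 < L0)
    (hy : QuasiShell k ℓ L0 y) {r : ℝ} (hr : r ≤ 2 * innerRadius L0 y) :
    IntegrableOn (fun s => s ^ 2 * rho k ℓ L0 y s) (Set.Ioc 0 r) := by
  refine IntegrableOn.of_bound (by simp) (rho_aemeas hy.1.continuousOn r)
    (Dc ℓ L0 * 1 ^ qExp k ℓ / innerRadius L0 y ^ 2) ?_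
  filter_upwards [ae_restrict_mem measurableSet_Ioc] with s hs
  exact rho_bound hk hl hL hy zero_le_one le_rfl hs.1 (by linarith [hs.2])

lemma mass_upper {k ℓ L0 : ℝ} {y : ℝ → ℝ} (hk : 0 ≤ k) (hl : -(1 / 2) ≤ ℓ) (hL : 0 < L0)
    (hy : QuasiShell k ℓ L0 y) {x r : ℝ} (hx0 : 0 < x) (hx : x ≤ 1)
    (hrR : innerRadius L0 y ≤ r) (hr : r ≤ innerRadius L0 y * (1 + x)) :
    hawkingMass k ℓ L0 y r / r ≤
      4 * π * (Dc ℓ L0 * x ^ (qExp k ℓ + 1) / innerRadius L0 y ^ 2) := by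
  have hp := innerRadius_pos (y := y) hL
  have hD := Dc_nonneg (ℓ := ℓ) hL
  have hr0 : 0 < r := hp.trans_le hrR
  unfold hawkingMass
  have h1 : ∫ s in Set.Ioc (0 : ℝ) r, s ^ 2 * rho k ℓ L0 y s =
      ∫ s in Set.Ioc (innerRadius L0 y) r, s ^ 2 * rho k ℓ L0 y s := by
    apply setIntegral_eq_of_subset_of_forall_sdiff_eq_zero measurableSet_Ioc
    · exact Set.Ioc_subset_Ioc_left hp.le
    · intro s hs
      have : s ≤ innerRadius L0 y := by
        by_contra hc
        exact hs.2 ⟨not_le.1 hc, hs.1.2⟩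
      rw [rho_zero hL hs.1.1 (gam_nonpos hl hL hy hs.1.1 this), mul_zero]
  have h2 : ‖∫ s in Set.Ioc (innerRadius L0 y) r, s ^ 2 * rho k ℓ L0 y s‖ ≤
      (Dc ℓ L0 * x ^ qExp k ℓ / innerRadius L0 y ^ 2) *
        volume.real (Set.Ioc (innerRadius L0 y) r) := by
    apply norm_setIntegral_le_of_norm_le_const (by simp)
    intro s hs
    exact rho_bound hk hl hL hy hx0.le hx (hp.trans hs.1) (hs.2.trans hr)
  have h3 : volume.real (Set.Ioc (innerRadius L0 y) r) ≤ innerRadius L0 y * x := by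
    rw [Measure.real, Real.volume_Ioc, ENNReal.toReal_ofReal (by linarith)]
    linarith
  have h4 := (le_abs_self _).trans (h2.trans (mul_le_mul_of_nonneg_left h3 (by positivity)))
  rw [h1, div_le_iff₀ hr0]
  have h5 : 0 ≤ Dc ℓ L0 * x ^ (qExp k ℓ + 1) / innerRadius L0 y ^ 2 := by positivity
  have h6 : (Dc ℓ L0 * x ^ qExp k ℓ / innerRadius L0 y ^ 2) * (innerRadius L0 y * x) =
      Dc ℓ L0 * x ^ (qExp k ℓ + 1) / innerRadius L0 y ^ 2 * innerRadius L0 y := by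
    rw [Real.rpow_add_one hx0.ne']; ring
  rw [h6] at h4
  have h7 := h4.trans (mul_le_mul_of_nonneg_left hrR h5)
  have := mul_le_mul_of_nonneg_left h7 (show (0 : ℝ) ≤ 4 * π by positivity)
  linarith

/-- Growth of `γ` on the first interval. -/
lemma gam_growth {k ℓ L0 Cu : ℝ} {y : ℝ → ℝ} (hk : 0 ≤ k) (hl : -(1 / 2) ≤ ℓ) (hL : 0 < L0)
    (hCu : 0 < Cu) (hy : QuasiShell k ℓ L0 y)
    (hpres : ∀ r, innerRadius L0 y ≤ r → r ≤ 2 * innerRadius L0 y →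
          0 ≤ charFn L0 y r →
          pres k ℓ L0 y r ≤ Cu * charFn L0 y r ^ (qExp k ℓ + 1) / r ^ 4)
    {x : ℝ} (hx0 : 0 < x) (hx : x ≤ 1)
    (hsm : 4 * π * ((Dc ℓ L0 + Cu) * x ^ (qExp k ℓ + 1) / innerRadius L0 y ^ 2) ≤ 1 / 16) :
    3 / 4 * (x / (1 + x)) ≤ charFn L0 y (innerRadius L0 y * (1 + x)) := by
  have hp := innerRadius_pos (y := y) hL
  have hD := Dc_nonneg (ℓ := ℓ) hL
  have hq : 0 ≤ qExp k ℓ + 1 := by unfold qExp; linarith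
  have hpi := Real.pi_pos
  set R := innerRadius L0 y with hR
  have hlt : R ≤ R * (1 + x) := by nlinarith
  have hmono : MonotoneOn (fun r => y r + 1 / 4 * Real.log r) (Set.Icc R (R * (1 + x))) := by
    have hd : ∀ r, 0 < r → HasDerivAt (fun r => y r + 1 / 4 * Real.log r)
        (-(1 - 2 * hawkingMass k ℓ L0 y r / r)⁻¹ *
        (4 * π * r * pres k ℓ L0 y r + hawkingMass k ℓ L0 y r / r ^ 2) + 1 / 4 * r⁻¹) r :=
      fun r hr => (hy.2 r hr).2.add ((Real.hasDerivAt_log hr.ne').const_mul _)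
    apply monotoneOn_of_deriv_nonneg (convex_Icc _ _)
    · intro r hr
      exact (hd r (hp.trans_le hr.1)).continuousAt.continuousWithinAt
    · intro r hr
      rw [interior_Icc] at hr
      exact (hd r (hp.trans hr.1)).differentiableAt.differentiableWithinAt
    · intro r hr
      rw [interior_Icc] at hr
      have hr0 : 0 < r := hp.trans hr.1
      rw [(hd r hr0).deriv]
      have hm := mass_upper hk hl hL hy hx0 hx hr.1.le hr.2.le
      rw [← hR] at hm
      have hm0 : 0 ≤ hawkingMass k ℓ L0 y r / r := div_nonneg (mass_nonneg hL) hr0.le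
      have hX : 0 ≤ x ^ (qExp k ℓ + 1) / R ^ 2 := by positivity
      have hPr : 4 * π * r ^ 2 * pres k ℓ L0 y r ≤
          4 * π * (Cu * x ^ (qExp k ℓ + 1) / R ^ 2) := by
        rcases le_or_gt (charFn L0 y r) 0 with h | h
        · rw [pres_zero hL hr0 h, mul_zero]; positivity
        have h1 := gam_le hl hL hy hr0
        rw [← hR] at h1
        have h2 : r / R ≤ 1 + x := by rw [div_le_iff₀ hp]; linarith [hr.2]
        have h3 : charFn L0 y r ≤ x := by
          have := Real.log_le_sub_one_of_pos (show 0 < r / R by positivity)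
          linarith
        have h4 := hpres r hr.1.le (by nlinarith [hr.2]) h.le
        have hRr : R ≤ r := hr.1.le
        calc 4 * π * r ^ 2 * pres k ℓ L0 y r
            ≤ 4 * π * r ^ 2 * (Cu * charFn L0 y r ^ (qExp k ℓ + 1) / r ^ 4) := by gcongr
          _ = 4 * π * (Cu * charFn L0 y r ^ (qExp k ℓ + 1) / r ^ 2) := by field_simp
          _ ≤ _ := by gcongr
      have hPr0 : 0 ≤ 4 * π * r ^ 2 * pres k ℓ L0 y r := by
        have := pres_nonneg (k := k) (y := y) hl hL hr0
        positivity
      set M := hawkingMass k ℓ L0 y r / r with hM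
      set P := 4 * π * r ^ 2 * pres k ℓ L0 y r with hP
      have hsum : 4 * π * ((Dc ℓ L0 + Cu) * x ^ (qExp k ℓ + 1) / R ^ 2) =
        4 * π * (Dc ℓ L0 * x ^ (qExp k ℓ + 1) / R ^ 2) +
        4 * π * (Cu * x ^ (qExp k ℓ + 1) / R ^ 2) := by ring
      have hMP : P + M ≤ 1 / 16 := by linarith
      have e1 : 4 * π * r * pres k ℓ L0 y r + hawkingMass k ℓ L0 y r / r ^ 2 = (P + M) * r⁻¹ := by
        rw [hP, hM]; field_simp
      have e2 : 2 * hawkingMass k ℓ L0 y r / r = 2 * M := by rw [hM]; ring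
      rw [e1, e2]
      have h9 : (1 - 2 * M)⁻¹ ≤ 2 := by
        rw [inv_le_comm₀ (by linarith) (by norm_num)]; linarith
      have h10 : (1 - 2 * M)⁻¹ * (P + M) ≤ 2 * (1 / 16) :=
        mul_le_mul h9 hMP (by linarith) (by norm_num)
      have h11 : 0 < r⁻¹ := inv_pos.2 hr0
      have : -(1 - 2 * M)⁻¹ * ((P + M) * r⁻¹) + 1 / 4 * r⁻¹ =
        (1 / 4 - (1 - 2 * M)⁻¹ * (P + M)) * r⁻¹ := by ring
      rw [this]
      exact mul_nonneg (by linarith) h11.le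
  have h1 := hmono (Set.left_mem_Icc.2 hlt) (Set.right_mem_Icc.2 hlt) hlt
  have h0 := gam_R hl hL hy
  rw [← hR, charFn_eq hL hp] at h0
  rw [charFn_eq hL (by positivity)]
  simp only at h1
  have hlog : Real.log (R * (1 + x)) = Real.log R + Real.log (1 + x) :=
    Real.log_mul hp.ne' (by positivity)
  rw [hlog] at h1 ⊢
  have h2 := Real.one_sub_inv_le_log_of_pos (show 0 < 1 + x by positivity)
  have h3 : x / (1 + x) = 1 - (1 + x)⁻¹ := by field_simp; ring
  rw [h3]
  linarith

/-- Lower bound for the mass. -/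
lemma mass_lower {k ℓ L0 Cl g : ℝ} {y : ℝ → ℝ} (hk : 0 ≤ k) (hl : -(1 / 2) ≤ ℓ) (hL : 0 < L0)
    (hCl : 0 < Cl) (hy : QuasiShell k ℓ L0 y)
    (hrho : ∀ r, innerRadius L0 y ≤ r → r ≤ 2 * innerRadius L0 y →
          0 ≤ charFn L0 y r → Cl * charFn L0 y r ^ qExp k ℓ / r ^ 4 ≤ rho k ℓ L0 y r)
    {a b : ℝ} (ha : innerRadius L0 y ≤ a) (hab : a ≤ b) (hb : b ≤ 2 * innerRadius L0 y)
    (hg : 0 ≤ g) (hgam : ∀ r ∈ Set.Icc a b, g ≤ charFn L0 y r) :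
    4 * π * (Cl * g ^ qExp k ℓ / (4 * innerRadius L0 y ^ 2) * (b - a)) ≤
      hawkingMass k ℓ L0 y b := by
  have hp := innerRadius_pos (y := y) hL
  have hq : 0 ≤ qExp k ℓ := by unfold qExp; linarith
  unfold hawkingMass
  apply mul_le_mul_of_nonneg_left _ (by positivity)
  set R := innerRadius L0 y with hR
  have hi := rho_integrable hk hl hL hy hb
  have hsub : Set.Ioc a b ⊆ Set.Ioc 0 b := Set.Ioc_subset_Ioc_left (hp.le.trans ha)
  have h1 : ∫ s in Set.Ioc a b, s ^ 2 * rho k ℓ L0 y s ≤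
      ∫ s in Set.Ioc 0 b, s ^ 2 * rho k ℓ L0 y s := by
    apply setIntegral_mono_set hi
    · filter_upwards [ae_restrict_mem measurableSet_Ioc] with s hs
      exact mul_nonneg (sq_nonneg _) (rho_nonneg hL hs.1)
    · exact hsub.eventuallyLE
  refine le_trans ?_ h1
  have h2 : ∫ s in Set.Ioc a b, Cl * g ^ qExp k ℓ / (4 * R ^ 2) ≤
      ∫ s in Set.Ioc a b, s ^ 2 * rho k ℓ L0 y s := by
    apply setIntegral_mono_on (by simp) (hi.mono_set hsub) measurableSet_Ioc
    intro s hs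
    have hs0 : 0 < s := hp.trans_le (ha.trans hs.1.le)
    have hgs := hgam s ⟨hs.1.le, hs.2⟩
    have h3 := hrho s (ha.trans hs.1.le) (hs.2.trans hb) (hg.trans hgs)
    have h4 : 0 ≤ Cl * charFn L0 y s ^ qExp k ℓ :=
      mul_nonneg hCl.le (Real.rpow_nonneg (hg.trans hgs) _)
    have hs2 : s ^ 2 ≤ 4 * R ^ 2 := by nlinarith [hs.2]
    calc Cl * g ^ qExp k ℓ / (4 * R ^ 2) ≤ Cl * charFn L0 y s ^ qExp k ℓ / s ^ 2 := by gcongr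
      _ = s ^ 2 * (Cl * charFn L0 y s ^ qExp k ℓ / s ^ 4) := by field_simp
      _ ≤ _ := by gcongr
  rw [setIntegral_const, Measure.real, Real.volume_Ioc,
    ENNReal.toReal_ofReal (by linarith), smul_eq_mul] at h2
  linarith

set_option maxHeartbeats 2000000 in
/-- Existence of the radius `r₂` where `γ` comes back down to `γ_*`,
with `r₂ ≤ R₀ + σ_* + κ R₀^{(q+2)/(q+1)}`. -/
theorem second_crossing (k ℓ L0 Cl Cu : ℝ)
    (hk : 0 ≤ k) (hl : -(1 / 2) ≤ ℓ) (hL : 0 < L0) (hCl : 0 < Cl) (hCu : 0 < Cu) :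
    ∃ ε : ℝ, 0 < ε ∧
      ∀ y : ℝ → ℝ, QuasiShell k ℓ L0 y →
        (∀ r, innerRadius L0 y ≤ r → r ≤ 2 * innerRadius L0 y →
          0 ≤ charFn L0 y r →
          Cl * charFn L0 y r ^ qExp k ℓ / r ^ 4 ≤ rho k ℓ L0 y r ∧
          pres k ℓ L0 y r ≤ Cu * charFn L0 y r ^ (qExp k ℓ + 1) / r ^ 4) →
        innerRadius L0 y ≤ ε →
        innerRadius L0 y ^ (1 / (1 + qExp k ℓ)) * Kc k ℓ Cl Cu ≤ 1 →
        ∃ r2 : ℝ,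
          innerRadius L0 y + sigmaStar k ℓ Cu (innerRadius L0 y) < r2 ∧
          r2 ≤ innerRadius L0 y + sigmaStar k ℓ Cu (innerRadius L0 y) +
              kappaC k ℓ Cl Cu * innerRadius L0 y ^ ((qExp k ℓ + 2) / (qExp k ℓ + 1)) ∧
          charFn L0 y r2 = gammaStar k ℓ Cu (innerRadius L0 y) ∧
          ∀ r, innerRadius L0 y + sigmaStar k ℓ Cu (innerRadius L0 y) ≤ r → r ≤ r2 →
            gammaStar k ℓ Cu (innerRadius L0 y) ≤ charFn L0 y r := by
  have hq1 : 1 ≤ qExp k ℓ := by unfold qExp; linarith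
  have hpi := Real.pi_pos
  have hD := Dc_nonneg (ℓ := ℓ) hL
  have hC0 : 0 < C0c k ℓ Cu := by
    unfold C0c
    have : 0 < Cmax Cu := lt_of_lt_of_le one_pos (le_max_left _ _)
    positivity
  have hC04 : C0c k ℓ Cu ≤ 1 / 4 := min_le_left _ _
  have hkap : 0 < kappaC k ℓ Cl Cu := by unfold kappaC; positivity
  set q := qExp k ℓ with hq
  set D := Dc ℓ L0 with hDdef
  set C0 := C0c k ℓ Cu with hC0def
  set κ := kappaC k ℓ Cl Cu with hκdef
  have hq0 : 0 < q := by linarith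
  have hDC : 0 < D + Cu := by linarith
  set δ := 1 / (64 * π * (D + Cu)) with hδ
  have hδ0 : 0 < δ := by positivity
  refine ⟨min 1 (min (δ ^ q) ((1 / (2 * κ)) ^ (q + 1))), by positivity, ?_⟩
  intro y hy hyp hRe _
  have hp := innerRadius_pos (y := y) hL
  set R := innerRadius L0 y with hR
  have hR1 : R ≤ 1 := hRe.trans (min_le_left _ _)
  have hRδ : R ^ (1 / q) ≤ δ := by
    have : R ≤ δ ^ q := hRe.trans ((min_le_right _ _).trans (min_le_left _ _))
    calc R ^ (1 / q) ≤ (δ ^ q) ^ (1 / q) := Real.rpow_le_rpow hp.le this (by positivity)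
      _ = δ := by rw [← Real.rpow_mul hδ0.le, mul_one_div_cancel hq0.ne', Real.rpow_one]
  have hRκ : κ * R ^ (1 / (q + 1)) ≤ 1 / 2 := by
    have : R ≤ (1 / (2 * κ)) ^ (q + 1) :=
      hRe.trans ((min_le_right _ _).trans (min_le_right _ _))
    have h2 : R ^ (1 / (q + 1)) ≤ 1 / (2 * κ) := by
      calc R ^ (1 / (q + 1)) ≤ ((1 / (2 * κ)) ^ (q + 1)) ^ (1 / (q + 1)) :=
            Real.rpow_le_rpow hp.le this (by positivity)
        _ = 1 / (2 * κ) := by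
            rw [← Real.rpow_mul (by positivity), mul_one_div_cancel (by positivity), Real.rpow_one]
    calc κ * R ^ (1 / (q + 1)) ≤ κ * (1 / (2 * κ)) := mul_le_mul_of_nonneg_left h2 hkap.le
      _ = 1 / 2 := by field_simp
  set β := (2 * q + 1) / (q * (q + 1)) with hβ
  have hβ0 : 0 < β := by positivity
  set x := C0 * R ^ β with hx
  have hx0 : 0 < x := by positivity
  have hx4 : x ≤ 1 / 4 := by
    have : R ^ β ≤ 1 := Real.rpow_le_one hp.le hR1 hβ0.le
    have h0 : 0 < R ^ β := by positivity
    nlinarith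
  have hσ : sigmaStar k ℓ Cu R = R * x := by
    unfold sigmaStar
    rw [← hq, ← hβ, ← hC0def, Real.rpow_add hp, Real.rpow_one, hx]; ring
  have hγ : gammaStar k ℓ Cu R = 1 / 2 * (x / (1 + x)) := by
    unfold gammaStar
    rw [hσ]; field_simp
  have hΔ : κ * R ^ ((q + 2) / (q + 1)) ≤ R / 2 := by
    have : (q + 2) / (q + 1) = 1 + 1 / (q + 1) := by field_simp; ring
    rw [this, Real.rpow_add hp, Real.rpow_one]
    nlinarith
  have hΔ0 : 0 < κ * R ^ ((q + 2) / (q + 1)) := by positivity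
  have hxq : x ^ (q + 1) / R ^ 2 ≤ R ^ (1 / q) := by
    rw [div_le_iff₀ (by positivity), hx, Real.mul_rpow hC0.le (by positivity),
      ← Real.rpow_mul hp.le, ← Real.rpow_natCast R 2, ← Real.rpow_add hp]
    have e : β * (q + 1) = 1 / q + ((2 : ℕ) : ℝ) := by rw [hβ]; push_cast; field_simp; ring
    rw [e]
    have : C0 ^ (q + 1) ≤ 1 := Real.rpow_le_one hC0.le (by linarith) (by linarith)
    exact mul_le_of_le_one_left (by positivity) this
  have hsm : 4 * π * ((D + Cu) * x ^ (q + 1) / R ^ 2) ≤ 1 / 16 := by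
    calc 4 * π * ((D + Cu) * x ^ (q + 1) / R ^ 2) = 4 * π * (D + Cu) * (x ^ (q + 1) / R ^ 2) := by
          ring
      _ ≤ 4 * π * (D + Cu) * δ := by gcongr; exact hxq.trans hRδ
      _ = 1 / 16 := by rw [hδ]; field_simp; norm_num
  have hgr := gam_growth hk hl hL hCu hy (fun r h1 h2 h3 => (hyp r h1 h2 h3).2) hx0
    (by linarith) hsm
  rw [← hR] at hgr
  have hxx : 0 < x / (1 + x) := by positivity
  rw [hσ, hγ]
  set g := 1 / 2 * (x / (1 + x)) with hg
  have hg0 : 0 < g := by positivity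
  set a := R + R * x with ha
  set b := a + κ * R ^ ((q + 2) / (q + 1)) with hb
  have hRa : R ≤ a := by nlinarith
  have hab : a < b := by linarith
  have hb2 : b ≤ 2 * R := by nlinarith
  have hga : g < charFn L0 y a := by
    have : R * (1 + x) = a := by rw [ha]; ring
    rw [this] at hgr
    linarith
  have hcont : ContinuousOn (charFn L0 y) (Set.Icc a b) := by
    have h1 : ContinuousOn (fun r => y r + Real.log r - Real.log L0 / 2) (Set.Icc a b) := by
      intro r hr
      have hr0 : 0 < r := by linarith [hr.1]
      exact (((hy.2 r hr0).2.continuousAt.add (Real.continuousAt_log hr0.ne')).sub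
        continuousAt_const).continuousWithinAt
    exact h1.congr (fun r hr => charFn_eq hL (by linarith [hr.1]))
  have hex : ∃ r ∈ Set.Icc a b, charFn L0 y r ≤ g := by
    by_contra hcon
    push Not at hcon
    have hml := mass_lower hk hl hL hCl hy (fun r h1 h2 h3 => (hyp r h1 h2 h3).1) hRa hab.le hb2
      hg0.le (fun r hr => (hcon r hr).le)
    rw [← hR, ← hq] at hml
    have hb0 : 0 < b := by linarith
    have hlt := (hy.2 b hb0).1
    rw [div_lt_one hb0] at hlt
    have hgx : x / 4 ≤ g := by
      rw [hg, ← mul_div_assoc, div_le_div_iff₀ (by norm_num) (by positivity)]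
      nlinarith
    have hgq : C0 ^ q * R ^ (β * q) / 2 ^ (2 * q) ≤ g ^ q := by
      calc C0 ^ q * R ^ (β * q) / 2 ^ (2 * q) = (x / 4) ^ q := by
            rw [Real.div_rpow hx0.le (by norm_num), hx, Real.mul_rpow hC0.le (by positivity),
              ← Real.rpow_mul hp.le, Real.rpow_mul (by norm_num : (0 : ℝ) ≤ 2)]
            norm_num
        _ ≤ g ^ q := Real.rpow_le_rpow (by positivity) hgx hq0.le
    have hba : b - a = κ * R ^ ((q + 2) / (q + 1)) := by rw [hb]; ring
    have key : 9 * R / 4 ≤ Cl * g ^ q / (4 * R ^ 2) * (b - a) := by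
      calc 9 * R / 4
          = Cl * (C0 ^ q * R ^ (β * q) / 2 ^ (2 * q)) / (4 * R ^ 2) *
              (κ * R ^ ((q + 2) / (q + 1))) := by
            have e1 : R ^ (β * q) * R ^ ((q + 2) / (q + 1)) = R ^ 3 := by
              rw [← Real.rpow_add hp, ← Real.rpow_natCast R 3]
              congr 1
              rw [hβ]; push_cast; field_simp; ring
            have e2 : κ = 9 * 2 ^ (2 * q) / (Cl * C0 ^ q) := rfl
            have e3 : Cl * (C0 ^ q * R ^ (β * q) / 2 ^ (2 * q)) / (4 * R ^ 2) *
              (κ * R ^ ((q + 2) / (q + 1))) = Cl * (C0 ^ q / 2 ^ (2 * q)) / (4 * R ^ 2) *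
              κ * (R ^ (β * q) * R ^ ((q + 2) / (q + 1))) := by ring
            have h1 : 0 < C0 ^ q := by positivity
            have h2 : (0 : ℝ) < 2 ^ (2 * q) := by positivity
            rw [e3, e1, e2]
            generalize (2 : ℝ) ^ (2 * q) = t at h2 ⊢
            generalize C0 ^ q = u at h1 ⊢
            field_simp
        _ ≤ Cl * g ^ q / (4 * R ^ 2) * (b - a) := by
            rw [hba]
            gcongr
    have h3 := Real.pi_gt_three
    have h4 : 4 * 3 * (9 * R / 4) ≤ 4 * π * (Cl * g ^ q / (4 * R ^ 2) * (b - a)) := by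
      have : (0 : ℝ) ≤ 9 * R / 4 := by positivity
      exact mul_le_mul (by linarith) key this (by positivity)
    linarith
  -- the first radius at which `γ ≤ γ_*`
  set S := Set.Icc a b ∩ charFn L0 y ⁻¹' Set.Iic g with hS
  have hSne : S.Nonempty := by
    obtain ⟨r, hr, h⟩ := hex
    exact ⟨r, hr, h⟩
  have hSc : IsClosed S := hcont.preimage_isClosed_of_isClosed isClosed_Icc isClosed_Iic
  have hSb : BddBelow S := ⟨a, fun r hr => hr.1.1⟩
  have hmem := hSc.csInf_mem hSne hSb
  set r2 := sInf S with hr2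
  have hr2g : charFn L0 y r2 ≤ g := hmem.2
  have har2 : a < r2 := by
    rcases hmem.1.1.eq_or_lt with h | h
    · rw [← h] at hr2g; linarith
    · exact h
  have hbefore : ∀ r, a ≤ r → r < r2 → g < charFn L0 y r := by
    intro r h1 h2
    by_contra hc
    exact absurd (csInf_le hSb (show r ∈ S from ⟨⟨h1, h2.le.trans hmem.1.2⟩, not_lt.1 hc⟩))
      (not_le.2 h2)
  have heq : charFn L0 y r2 = g := by
    apply le_antisymm hr2g
    by_contra hc
    have hlt := not_le.1 hc
    have hsub := intermediate_value_Icc' har2.le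
      (hcont.mono (Set.Icc_subset_Icc_right hmem.1.2))
    obtain ⟨c, hc1, hc2⟩ := hsub ⟨hlt.le, hga.le⟩
    rcases hc1.2.eq_or_lt with h | h
    · rw [h] at hc2; linarith
    · linarith [hbefore c hc1.1 h]
  refine ⟨r2, har2, hmem.1.2, heq, ?_⟩
  intro r h1 h2
  rcases h2.eq_or_lt with h | h
  · rw [h, heq]
  · exact (hbefore r h1 h).le
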